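/- arXiv:1107.2735 — 2 statements merged into one kernel-verified Lean document; each statement's English description precedes it below -/
import Mathlib

section
/- Let n ≥ 3 be an integer, let η > 0, and let m, α, β satisfy 0 < m < (n−2)/n and 2β/(1−m) > α > 0. Let v be a radial solution of (E) on [0,∞) and set q(r) = r^{α/β}·v(r). Then q'(r) > 0 for all r > 0, and for every p with 1 < p < 3 − (α/β)·(1−m), lim_{r→∞} r^{p}·q'(r)/q(r) = 0. -/
open Real Set Filter

/-- `v` is a radial solution of the elliptic equation
`((n-1)/m)·((v^m)'' + ((n-1)/r)(v^m)') + α v + β r v' = 0` on `[0, ∞)`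
with `v > 0`, `v(0) = η`, `v'(0) = 0`. -/
def IsRadialSol (n : ℕ) (m α β η : ℝ) (v : ℝ → ℝ) : Prop :=
  (∀ r ∈ Set.Ici (0:ℝ), 0 < v r) ∧
  ContinuousOn v (Set.Ici (0:ℝ)) ∧
  ContDiffOn ℝ 2 v (Set.Ioi (0:ℝ)) ∧
  HasDerivWithinAt v 0 (Set.Ici (0:ℝ)) 0 ∧
  v 0 = η ∧
  ∀ r ∈ Set.Ioi (0:ℝ),
    (((n : ℝ) - 1) / m) * (deriv (deriv (fun s => v s ^ m)) r
      + (((n : ℝ) - 1) / r) * deriv (fun s => v s ^ m) r)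
    + α * v r + β * r * deriv v r = 0

/-- The logarithmic derivative of `q`, times `r`. -/
noncomputable def auxP (k : ℝ) (v : ℝ → ℝ) (r : ℝ) : ℝ := k + r * deriv v r / v r

lemma auxP_hasDerivAt (n : ℕ) (hn : 3 ≤ n) (m α β η : ℝ)
    (hm : 0 < m) (hβ : 0 < β)
    (v : ℝ → ℝ) (hv : IsRadialSol n m α β η v) (r : ℝ) (hr : 0 < r) :
    HasDerivAt (auxP (α / β) v)
      ((((n : ℝ) - 2) * (α / β - auxP (α / β) v r) - m * (α / β - auxP (α / β) v r) ^ 2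
        - β / ((n : ℝ) - 1) * (r ^ 2 * v r ^ (1 - m)) * auxP (α / β) v r) / r) r := by
  obtain ⟨hpos, -, hC, -, -, hode⟩ := hv
  have hn1 : (0 : ℝ) < (n : ℝ) - 1 := by
    have : (3 : ℝ) ≤ n := by exact_mod_cast hn
    linarith
  have hd : ∀ s, 0 < s → HasDerivAt v (deriv v s) s := fun s hs =>
    ((hC.differentiableOn (by norm_num)).differentiableAt (Ioi_mem_nhds hs)).hasDerivAt
  have hC1 : ContDiffOn ℝ 1 (deriv v) (Set.Ioi 0) :=
    ((contDiffOn_succ_iff_deriv_of_isOpen (n := 1) isOpen_Ioi).1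
      (by simpa [one_add_one_eq_two] using hC)).2.2
  have hd2 : HasDerivAt (deriv v) (deriv (deriv v) r) r :=
    ((hC1.differentiableOn (by norm_num)).differentiableAt (Ioi_mem_nhds hr)).hasDerivAt
  have hp : ∀ s, 0 < s → 0 < v s := fun s hs => hpos s hs.le
  have h1 : ∀ s, 0 < s → deriv (fun s => v s ^ m) s = deriv v s * m * v s ^ (m - 1) :=
    fun s hs => ((hd s hs).rpow_const (Or.inl (hp s hs).ne')).deriv
  have h2 : deriv (deriv (fun s => v s ^ m)) r
      = deriv (deriv v) r * m * v r ^ (m - 1)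
        + deriv v r * m * (deriv v r * (m - 1) * v r ^ (m - 1 - 1)) := by
    have : deriv (fun s => v s ^ m) =ᶠ[nhds r] fun s => deriv v s * m * v s ^ (m - 1) := by
      filter_upwards [Ioi_mem_nhds hr] with s hs using h1 s hs
    rw [this.deriv_eq]
    exact ((hd2.mul_const m).mul ((hd r hr).rpow_const (Or.inl (hp r hr).ne'))).deriv
  have ho := hode r hr
  rw [h2, h1 r hr] at ho
  have hv0 := hp r hr
  have hP : HasDerivAt (auxP (α / β) v)
      (((1 * deriv v r + r * deriv (deriv v) r) * v r - r * deriv v r * deriv v r) / v r ^ 2) r :=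
    ((((hasDerivAt_id' r).mul hd2).div (hd r hr) hv0.ne')).const_add _
  convert hP using 1
  have e1 : v r ^ (m - 1) = (v r ^ (1 - m))⁻¹ := by
    rw [← Real.rpow_neg hv0.le]; ring_nf
  have e2 : v r ^ (m - 1 - 1) = (v r ^ (1 - m))⁻¹ / v r := by
    rw [Real.rpow_sub_one hv0.ne', e1]
  rw [e1, e2] at ho
  have hX : 0 < v r ^ (1 - m) := Real.rpow_pos_of_pos hv0 _
  simp only [auxP]
  generalize v r ^ (1 - m) = X at *
  generalize deriv (deriv v) r = b at *
  generalize deriv v r = a at *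
  generalize v r = y at *
  field_simp at ho ⊢
  linear_combination (-(r * β ^ 2)) * ho

lemma auxP_pos (n : ℕ) (hn : 3 ≤ n) (m α β η : ℝ)
    (hm : 0 < m) (hβ : 0 < β) (hk : 0 < α / β) (hmk : m * (α / β) < (n : ℝ) - 2)
    (v : ℝ → ℝ) (hv : IsRadialSol n m α β η v) (r : ℝ) (hr : 0 < r) :
    0 < auxP (α / β) v r := by
  have hD := auxP_hasDerivAt n hn m α β η hm hβ v hv
  set k := α / β with hkdef
  -- arbitrarily small points with `P > 0`
  have hstart : ∃ s, 0 < s ∧ s < r ∧ 0 < auxP k v s := by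
    obtain ⟨hpos, hcont, hC, -, -, -⟩ := hv
    by_contra hcon
    push Not at hcon
    have hd : ∀ s, 0 < s → HasDerivAt v (deriv v s) s := fun s hs =>
      ((hC.differentiableOn (by norm_num)).differentiableAt (Ioi_mem_nhds hs)).hasDerivAt
    have hva : Tendsto v (nhdsWithin 0 (Set.Ioi 0)) (nhds (v 0)) :=
      ((hcont 0 (by simp)).mono Set.Ioi_subset_Ici_self)
    have hvb : Tendsto (fun s => v (2 * s)) (nhdsWithin 0 (Set.Ioi 0)) (nhds (v 0)) := by
      refine hva.comp (tendsto_nhdsWithin_iff.2 ⟨?_, ?_⟩)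
      · have : Tendsto (fun s : ℝ => 2 * s) (nhds 0) (nhds (2 * 0)) :=
          (continuous_const.mul continuous_id).tendsto 0
        rw [mul_zero] at this
        exact this.mono_left nhdsWithin_le_nhds
      · filter_upwards [self_mem_nhdsWithin] with s hs
        exact mul_pos two_pos (Set.mem_Ioi.1 hs)
    have hlim : Tendsto (fun s => v s - (1 + k / 2) * v (2 * s)) (nhdsWithin 0 (Set.Ioi 0))
        (nhds (v 0 - (1 + k / 2) * v 0)) := hva.sub (hvb.const_mul _)
    have hneg : v 0 - (1 + k / 2) * v 0 < 0 := by
      nlinarith [mul_pos hk (hpos 0 (by simp))]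
    have hsmall : ∀ᶠ s : ℝ in nhdsWithin 0 (Set.Ioi 0), s < r / 2 :=
      nhdsWithin_le_nhds (Iio_mem_nhds (by linarith))
    obtain ⟨x, hxneg, hxr, hx0⟩ :=
      ((hlim.eventually (gt_mem_nhds hneg)).and (hsmall.and self_mem_nhdsWithin)).exists
    have hx0 : 0 < x := hx0
    have hnp : ∀ s, 0 < s → s < r → s * deriv v s ≤ -k * v s := by
      intro s hs hsr
      have h := hcon s hs hsr
      have hvs := hpos s hs.le
      have h' : s * deriv v s / v s ≤ -k := by unfold auxP at h; linarith
      exact (div_le_iff₀ hvs).1 h'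
    obtain ⟨y, hy, hye⟩ := exists_deriv_eq_slope v (a := x) (b := 2 * x) (by linarith)
      (fun z hz => (hd z (by linarith [hz.1])).continuousAt.continuousWithinAt)
      (fun z hz => (hd z (by linarith [hz.1])).differentiableAt.differentiableWithinAt)
    have hy0 : 0 < y := by linarith [hy.1]
    have hanti : v (2 * x) ≤ v y := by
      have : AntitoneOn v (Set.Icc y (2 * x)) := by
        apply antitoneOn_of_deriv_nonpos (convex_Icc _ _)
        · exact fun z hz => (hd z (by linarith [hz.1])).continuousAt.continuousWithinAt
        · intro z hz
          rw [interior_Icc] at hz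
          exact (hd z (by linarith [hz.1])).differentiableAt.differentiableWithinAt
        · intro z hz
          rw [interior_Icc] at hz
          have hz0 : 0 < z := by linarith [hz.1]
          have h3 := hnp z hz0 (by linarith [hz.2])
          have h4 := mul_pos hk (hpos z hz0.le)
          by_contra hc
          push Not at hc
          nlinarith [mul_pos hz0 hc]
      exact this (left_mem_Icc.2 hy.2.le) (right_mem_Icc.2 hy.2.le) hy.2.le
    have h5 := hnp y hy0 (by linarith [hy.2])
    have h6 : deriv v y * x = v (2 * x) - v x := by
      rw [hye]; field_simp; ring
    have h7 : k * v (2 * x) ≤ k * v y := mul_le_mul_of_nonneg_left hanti hk.le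
    have hvy := mul_pos hk (hpos (2 * x) (by simp; linarith))
    have h8 : deriv v y < 0 := by
      by_contra hc
      push Not at hc
      nlinarith [mul_nonneg hy0.le hc]
    have h9 : 2 * x * deriv v y ≤ y * deriv v y := by
      nlinarith [hy.2]
    linarith
  obtain ⟨s, hs, hsr, hPs⟩ := hstart
  have hz : ∀ x, 0 < x → auxP k v x = 0 →
      0 < (((n : ℝ) - 2) * (k - auxP k v x) - m * (k - auxP k v x) ^ 2
        - β / ((n : ℝ) - 1) * (x ^ 2 * v x ^ (1 - m)) * auxP k v x) / x := by
    intro x hx h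
    rw [h]
    apply div_pos _ hx
    nlinarith
  have hnn : ∀ x, s ≤ x → 0 ≤ auxP k v x := by
    intro x hx
    have := image_le_of_deriv_right_lt_deriv_boundary' (a := s) (b := x)
      (f := fun y => - auxP k v y) (B := fun _ => 0) (B' := fun _ => 0)
      (f' := fun y => - ((((n : ℝ) - 2) * (k - auxP k v y) - m * (k - auxP k v y) ^ 2
        - β / ((n : ℝ) - 1) * (y ^ 2 * v y ^ (1 - m)) * auxP k v y) / y))
      (fun y hy => ((hD y (hs.trans_le hy.1)).neg).continuousAt.continuousWithinAt)
      (fun y hy => ((hD y (hs.trans_le hy.1)).neg).hasDerivWithinAt)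
      (by linarith) continuousOn_const
      (fun y hy => hasDerivWithinAt_const _ _ _)
      (fun y hy h => by
        have := hz y (hs.trans_le hy.1) (by linarith)
        linarith)
      (right_mem_Icc.2 hx)
    linarith
  refine lt_of_le_of_ne (hnn r hsr.le) fun h => ?_
  have hmin : IsLocalMin (auxP k v) r := by
    filter_upwards [Ioi_mem_nhds hsr] with y hy
    rw [← h]; exact hnn y hy.le
  have := hmin.hasDerivAt_eq_zero (hD r hr)
  linarith [hz r hr h.symm]

theorem stmt17 (n : ℕ) (hn : 3 ≤ n) (m α β η : ℝ) (hη : 0 < η)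
    (hm : 0 < m) (hm' : m < ((n : ℝ) - 2) / n)
    (hα : 0 < α) (hαβ : α < 2 * β / (1 - m))
    (v : ℝ → ℝ) (hv : IsRadialSol n m α β η v)
    (q : ℝ → ℝ) (hq : ∀ r : ℝ, q r = r ^ (α / β) * v r) :
    (∀ r : ℝ, 0 < r → 0 < deriv q r) ∧
    (∀ p : ℝ, 1 < p → p < 3 - (α / β) * (1 - m) →
      Tendsto (fun r : ℝ => r ^ p * deriv q r / q r) atTop (nhds 0)) := by
  have hn3 : (3 : ℝ) ≤ n := by exact_mod_cast hn
  have hn0 : (0 : ℝ) < n := by linarith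
  have hmn : m * n < (n : ℝ) - 2 := (lt_div_iff₀ hn0).1 hm'
  have hm1 : m < 1 := by nlinarith
  have h1m : 0 < 1 - m := by linarith
  have hαβ' : α * (1 - m) < 2 * β := (lt_div_iff₀ h1m).1 hαβ
  have hβ : 0 < β := by nlinarith [mul_pos hα h1m]
  have hk : 0 < α / β := div_pos hα hβ
  have hk2 : α / β * (1 - m) < 2 := by
    rw [div_mul_eq_mul_div, div_lt_iff₀ hβ]; exact hαβ'
  have hmk : m * (α / β) < (n : ℝ) - 2 := by
    have h3 : m * (α / β * (1 - m)) < m * 2 := mul_lt_mul_of_pos_left hk2 hm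
    by_contra hc
    push Not at hc
    nlinarith
  have hP := auxP_pos n hn m α β η hm hβ hk hmk v hv
  have hD := auxP_hasDerivAt n hn m α β η hm hβ v hv
  set k := α / β with hkdef
  have hpos : ∀ r, 0 < r → 0 < v r := fun r hr => hv.1 r hr.le
  have hqpos : ∀ r, 0 < r → 0 < q r := fun r hr => by
    rw [hq]; exact mul_pos (Real.rpow_pos_of_pos hr _) (hpos r hr)
  have hqd : ∀ r, 0 < r → HasDerivAt q (q r * auxP k v r / r) r := by
    intro r hr
    have hd : HasDerivAt v (deriv v r) r :=
      ((hv.2.2.1.differentiableOn (by norm_num)).differentiableAt (Ioi_mem_nhds hr)).hasDerivAt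
    have hqe : q = fun r => r ^ k * v r := funext hq
    rw [hqe]
    refine ((Real.hasDerivAt_rpow_const (p := k) (Or.inl hr.ne')).mul hd).congr_deriv ?_
    rw [Real.rpow_sub_one hr.ne']
    have := hpos r hr
    simp only [auxP]
    field_simp
  have hqd' : ∀ r, 0 < r → 0 < deriv q r := fun r hr => by
    rw [(hqd r hr).deriv]
    exact div_pos (mul_pos (hqpos r hr) (hP r hr)) hr
  refine ⟨hqd', fun p hp1 hp2 => ?_⟩
  set δ := 2 - k * (1 - m) with hδ
  have hδ0 : 0 < δ := by linarith
  have hmono : ∀ r, 1 ≤ r → q 1 ≤ q r := by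
    have : MonotoneOn q (Set.Ici 1) := by
      apply monotoneOn_of_deriv_nonneg (convex_Ici 1)
      · exact fun x hx => (hqd x (zero_lt_one.trans_le hx)).continuousAt.continuousWithinAt
      · intro x hx
        rw [interior_Ici] at hx
        exact (hqd x (zero_lt_one.trans hx)).differentiableAt.differentiableWithinAt
      · intro x hx
        rw [interior_Ici] at hx
        exact (hqd' x (zero_lt_one.trans hx)).le
    exact fun r hr => this (Set.mem_Ici.2 le_rfl) hr hr
  have hS : ∀ r, 0 < r → r ^ 2 * v r ^ (1 - m) = r ^ δ * q r ^ (1 - m) := by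
    intro r hr
    rw [hq, Real.mul_rpow (Real.rpow_pos_of_pos hr _).le (hpos r hr).le, ← Real.rpow_mul hr.le,
      ← mul_assoc, ← Real.rpow_add hr, hδ, sub_add_cancel, Real.rpow_two]
  set C := β / ((n : ℝ) - 1) * q 1 ^ (1 - m) with hCdef
  have hc0 : 0 < β / ((n : ℝ) - 1) := div_pos hβ (by linarith)
  have hC0 : 0 < C := mul_pos hc0 (Real.rpow_pos_of_pos (hqpos 1 one_pos) _)
  have hSC : ∀ r, 1 ≤ r → C * r ^ δ ≤ β / ((n : ℝ) - 1) * (r ^ 2 * v r ^ (1 - m)) := by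
    intro r hr
    have hr0 : 0 < r := zero_lt_one.trans_le hr
    rw [hS r hr0, hCdef]
    have : q 1 ^ (1 - m) ≤ q r ^ (1 - m) :=
      Real.rpow_le_rpow (hqpos 1 one_pos).le (hmono r hr) h1m.le
    have h5 := mul_le_mul_of_nonneg_left this (mul_pos hc0 (Real.rpow_pos_of_pos hr0 δ)).le
    linarith
  obtain ⟨R, hR1, hR⟩ : ∃ R : ℝ, 1 ≤ R ∧ ∀ r, R ≤ r → 2 * δ / C ≤ r ^ δ := by
    obtain ⟨R, hR⟩ := eventually_atTop.1
      ((tendsto_rpow_atTop hδ0).eventually (eventually_ge_atTop (2 * δ / C)))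
    exact ⟨max 1 R, le_max_left _ _, fun r hr => hR r ((le_max_right _ _).trans hr)⟩
  have hGd : ∀ r, 0 < r → HasDerivAt (fun r => r ^ δ * auxP k v r)
      (r ^ δ / r * (δ * auxP k v r + (((n : ℝ) - 2) * (k - auxP k v r)
        - m * (k - auxP k v r) ^ 2
        - β / ((n : ℝ) - 1) * (r ^ 2 * v r ^ (1 - m)) * auxP k v r))) r := by
    intro r hr
    refine ((Real.hasDerivAt_rpow_const (p := δ) (Or.inl hr.ne')).mul (hD r hr)).congr_deriv ?_
    rw [Real.rpow_sub_one hr.ne']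
    ring
  set A := ((n : ℝ) - 2) * k with hA
  have hA0 : 0 < A := mul_pos (by linarith) hk
  set K := max (R ^ δ * auxP k v R) (2 * A / C + 1) with hK
  have hbd : ∀ r, R ≤ r → r ^ δ * auxP k v r ≤ K := by
    intro x hx
    refine image_le_of_deriv_right_lt_deriv_boundary' (a := R) (b := x)
      (f := fun r => r ^ δ * auxP k v r) (B := fun _ => K) (B' := fun _ => 0)
      (fun y hy => (hGd y (by linarith [hy.1])).continuousAt.continuousWithinAt)
      (fun y hy => (hGd y (by linarith [hy.1])).hasDerivWithinAt)
      (le_max_left _ _) continuousOn_const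
      (fun y hy => hasDerivWithinAt_const _ _ _)
      (fun y hy h => ?_)
      (right_mem_Icc.2 hx)
    have hy0 : 0 < y := by linarith [hy.1]
    have hPy := hP y hy0
    have h6 := mul_le_mul_of_nonneg_right (hSC y (by linarith [hy.1])) hPy.le
    have h7 := mul_le_mul_of_nonneg_right (hR y hy.1) hPy.le
    have h8 : 2 * A / C + 1 ≤ y ^ δ * auxP k v y := by
      rw [h]; exact le_max_right _ _
    have h9 : 2 * A < C * (y ^ δ * auxP k v y) := by
      have : 2 * A / C < y ^ δ * auxP k v y := by linarith
      rw [div_lt_iff₀ hC0] at this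
      linarith
    have h10 : 2 * δ * auxP k v y ≤ C * (y ^ δ * auxP k v y) := by
      have : 2 * δ / C * auxP k v y * C = 2 * δ * auxP k v y := by field_simp
      nlinarith [mul_le_mul_of_nonneg_right h7 hC0.le]
    have h11 : 0 < ((n : ℝ) - 2) * auxP k v y := mul_pos (by linarith) hPy
    have h12 : 0 ≤ m * (k - auxP k v y) ^ 2 := by positivity
    apply mul_neg_of_pos_of_neg (div_pos (Real.rpow_pos_of_pos hy0 _) hy0)
    have h13 : ((n : ℝ) - 2) * (k - auxP k v y) = A - ((n : ℝ) - 2) * auxP k v y := by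
      rw [hA]; ring
    linarith
  have hlim : Tendsto (fun r : ℝ => K * r ^ (-(δ - (p - 1)))) atTop (nhds 0) := by
    simpa using (tendsto_rpow_neg_atTop (y := δ - (p - 1)) (by linarith)).const_mul K
  refine squeeze_zero' ?_ ?_ hlim
  · filter_upwards [eventually_gt_atTop 0] with r hr
    exact (div_pos (mul_pos (Real.rpow_pos_of_pos hr _) (hqd' r hr)) (hqpos r hr)).le
  · filter_upwards [eventually_ge_atTop R] with r hr
    have hr0 : 0 < r := by linarith
    have e : r ^ p * deriv q r / q r = (r ^ δ * auxP k v r) * r ^ (-(δ - (p - 1))) := by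
      rw [(hqd r hr0).deriv]
      have : r ^ p = r ^ δ * r ^ (-(δ - (p - 1))) * r := by
        rw [← Real.rpow_add hr0, ← Real.rpow_add_one hr0.ne']
        congr 1; ring
      rw [this]
      have := (hqpos r hr0).ne'
      field_simp
    rw [e]
    exact mul_le_mul_of_nonneg_right (hbd r hr) (Real.rpow_pos_of_pos hr0 _).le
end

section
/- Let n ≥ 3 be an integer, let η > 0, and let m, α, β satisfy 0 < m < (n−2)/n and 2β/(1−m) > max(α, 0). Let v be a radial solution of (E) on [0,∞). Then there exist constants C ≥ c > 0 such that c ≤ r^{α/β}·v(r) ≤ C for all r ≥ 1. -/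
open Real Set Filter

/-- Data of the reduced problem. -/
structure RDat (N m a β K : ℝ) (v dv w w1 w2 : ℝ → ℝ) : Prop where
  hN : 3 ≤ N
  hm : 0 < m
  hm1 : m < 1
  hβ : 0 < β
  hK : 0 < K
  vpos : ∀ r, 0 ≤ r → 0 < v r
  wdef : ∀ r, w r = v r ^ m
  wcont : ContinuousOn w (Ici 0)
  w0 : HasDerivWithinAt w 0 (Ici 0) 0
  hdv : ∀ r, 0 < r → HasDerivAt v (dv r) r
  hdw : ∀ r, 0 < r → HasDerivAt w (w1 r) r
  hdw1 : ∀ r, 0 < r → HasDerivAt w1 (w2 r) r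
  w1def : ∀ r, 0 < r → dv r = v r ^ (1 - m) * w1 r / m
  ode : ∀ r, 0 < r → K * (w2 r + (N - 1) / r * w1 r) + β * (a * v r + r * dv r) = 0

lemma sign_back (f f' : ℝ → ℝ) (hd : ∀ r, 0 < r → HasDerivAt f (f' r) r)
    (hs : ∀ r, 0 < r → f r < 0 → 0 ≤ f' r) (x y : ℝ) (hx : 0 < x) (hxy : x ≤ y) (hy : f y < 0) :
    f x ≤ f y := by
  by_contra hcon
  push Not at hcon
  obtain ⟨μ, hμ1, hμ2⟩ : ∃ μ, f y < μ ∧ μ < min (f x) 0 := exists_between (lt_min hcon hy)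
  have hμx := lt_of_lt_of_le hμ2 (min_le_left _ _)
  have hμ0 := lt_of_lt_of_le hμ2 (min_le_right _ _)
  have hc : ContinuousOn f (Icc x y) := fun s hs' =>
    (hd s (lt_of_lt_of_le hx hs'.1)).continuousAt.continuousWithinAt
  set S := Icc x y ∩ f ⁻¹' {μ} with hS
  have hSc : IsCompact S := by
    apply isCompact_Icc.of_isClosed_subset _ inter_subset_left
    exact hc.preimage_isClosed_of_isClosed isClosed_Icc isClosed_singleton
  have hSn : S.Nonempty := by
    obtain ⟨s, hs1, hs2⟩ := intermediate_value_Icc' hxy hc ⟨hμ1.le, hμx.le⟩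
    exact ⟨s, hs1, hs2⟩
  obtain ⟨s, hsS, hsmax⟩ := hSc.exists_isGreatest hSn
  have hsμ : f s = μ := hsS.2
  have hsy : s ≤ y := hsS.1.2
  have hs0 : 0 < s := lt_of_lt_of_le hx hsS.1.1
  have hlt : ∀ t ∈ Ioo s y, f t < 0 := by
    intro t ht
    by_contra h0
    push Not at h0
    have hc2 : ContinuousOn f (Icc t y) := hc.mono (Icc_subset_Icc (hsS.1.1.trans ht.1.le) le_rfl)
    obtain ⟨u, hu1, hu2⟩ := intermediate_value_Icc' ht.2.le hc2 ⟨hμ1.le, hμ0.le.trans h0⟩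
    have : u ≤ s := hsmax ⟨⟨hsS.1.1.trans (ht.1.le.trans hu1.1), hu1.2⟩, hu2⟩
    linarith [ht.1, hu1.1]
  have hmono : MonotoneOn f (Icc s y) := by
    apply monotoneOn_of_deriv_nonneg (convex_Icc _ _) (hc.mono (Icc_subset_Icc hsS.1.1 le_rfl))
    · intro t ht
      rw [interior_Icc] at ht
      exact (hd t (hs0.trans ht.1)).differentiableAt.differentiableWithinAt
    · intro t ht
      rw [interior_Icc] at ht
      rw [(hd t (hs0.trans ht.1)).deriv]
      exact hs t (hs0.trans ht.1) (hlt t ht)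
  have := hmono (left_mem_Icc.2 hsy) (right_mem_Icc.2 hsy) hsy
  linarith

lemma gronwall_pow (G G' : ℝ → ℝ) (R C ε : ℝ) (hR : 0 < R) (hε : 0 < ε)
    (hd : ∀ r, R ≤ r → HasDerivAt G (G' r) r) (hpos : ∀ r, R ≤ r → 0 < G r)
    (hb : ∀ r, R ≤ r → |G' r| ≤ C * r ^ (-ε - 1) * G r) (hC : 0 ≤ C) :
    ∃ c D : ℝ, 0 < c ∧ ∀ r, R ≤ r → c ≤ G r ∧ G r ≤ D := by
  have hL : ∀ r, R ≤ r → HasDerivAt (fun r => Real.log (G r)) (G' r / G r) r := fun r hr =>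
    (hd r hr).log (hpos r hr).ne'
  have hP : ∀ r, R ≤ r → HasDerivAt (fun r : ℝ => C / ε * r ^ (-ε)) (- (C * r ^ (-ε - 1))) r := by
    intro r hr
    have := (Real.hasDerivAt_rpow_const (x := r) (p := -ε) (Or.inl (hR.trans_le hr).ne')).const_mul (C / ε)
    refine this.congr_deriv ?_
    field_simp
  have hq : ∀ r, R ≤ r → |G' r / G r| ≤ C * r ^ (-ε - 1) := by
    intro r hr
    rw [abs_div, abs_of_pos (hpos r hr), div_le_iff₀ (hpos r hr)]
    exact hb r hr
  have h1 : AntitoneOn (fun r => Real.log (G r) + C / ε * r ^ (-ε)) (Ici R) := by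
    apply antitoneOn_of_deriv_nonpos (convex_Ici _)
    · exact fun r hr => ((hL r hr).add (hP r hr)).continuousAt.continuousWithinAt
    · intro r hr
      rw [interior_Ici] at hr
      exact ((hL r hr.le).add (hP r hr.le)).differentiableAt.differentiableWithinAt
    · intro r hr
      rw [interior_Ici] at hr
      have := ((hL r hr.le).add (hP r hr.le)).deriv
      have h3 := abs_le.1 (hq r hr.le)
      erw [this]
      linarith [h3.2]
  have h2 : MonotoneOn (fun r => Real.log (G r) - C / ε * r ^ (-ε)) (Ici R) := by
    apply monotoneOn_of_deriv_nonneg (convex_Ici _)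
    · exact fun r hr => ((hL r hr).sub (hP r hr)).continuousAt.continuousWithinAt
    · intro r hr
      rw [interior_Ici] at hr
      exact ((hL r hr.le).sub (hP r hr.le)).differentiableAt.differentiableWithinAt
    · intro r hr
      rw [interior_Ici] at hr
      have := ((hL r hr.le).sub (hP r hr.le)).deriv
      have h3 := abs_le.1 (hq r hr.le)
      erw [this]
      linarith [h3.1]
  refine ⟨Real.exp (Real.log (G R) - C / ε * R ^ (-ε)), Real.exp (Real.log (G R) + C / ε * R ^ (-ε)),
    Real.exp_pos _, fun r hr => ?_⟩
  have hp : 0 ≤ C / ε * r ^ (-ε) := by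
    have : 0 < r := hR.trans_le hr
    positivity
  have e1 := h1 (self_mem_Ici) hr hr
  have e2 := h2 (self_mem_Ici) hr hr
  simp only at e1 e2
  constructor
  · rw [← Real.le_log_iff_exp_le (hpos r hr)]; linarith
  · rw [← Real.log_le_iff_le_exp (hpos r hr)]; linarith

namespace RDat
variable {N m a β K : ℝ} {v dv w w1 w2 : ℝ → ℝ}

lemma wpos (h : RDat N m a β K v dv w w1 w2) (r : ℝ) (hr : 0 ≤ r) : 0 < w r := by
  rw [h.wdef]; exact Real.rpow_pos_of_pos (h.vpos r hr) _

lemma vw (h : RDat N m a β K v dv w w1 w2) (r : ℝ) (hr : 0 ≤ r) : v r = v r ^ (1 - m) * w r := by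
  rw [h.wdef, ← Real.rpow_add (h.vpos r hr)]; simp

lemma key (h : RDat N m a β K v dv w w1 w2) (r : ℝ) (hr : 0 < r) :
    a * v r + r * dv r = v r ^ (1 - m) / m * (m * a * w r + r * w1 r) := by
  have := h.vw r hr.le
  have hm := h.hm
  rw [h.w1def r hr]
  nth_rewrite 1 [this]
  field_simp

lemma nonneg (h : RDat N m a β K v dv w w1 w2) (l : ℝ) (hl : 0 ≤ l) (hml : m * a ≤ l)
    (hlN : l < N - 2) (r : ℝ) (hr : 0 < r) : 0 ≤ l * w r + r * w1 r := by
  by_contra hneg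
  push Not at hneg
  set f : ℝ → ℝ := fun r => r ^ (N - 2 - l) * (l * w r + r * w1 r) with hf
  set f' : ℝ → ℝ := fun r => r ^ (N - 3 - l) *
    (l * (N - 2 - l) * w r + r ^ 2 * (w2 r + (N - 1) / r * w1 r)) with hf'
  have hfd : ∀ r, 0 < r → HasDerivAt f (f' r) r := by
    intro r hr
    have h1 := (Real.hasDerivAt_rpow_const (x := r) (p := N - 2 - l) (Or.inl hr.ne')).mul
      (((h.hdw r hr).const_mul l).add ((hasDerivAt_id r).mul (h.hdw1 r hr)))
    refine h1.congr_deriv ?_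
    have e1 : r ^ (N - 2 - l) = r ^ (N - 3 - l) * r := by
      rw [← Real.rpow_add_one hr.ne']; ring_nf
    have e2 : r ^ (N - 2 - l - 1) = r ^ (N - 3 - l) := by ring_nf
    simp only [hf', e2, id, Pi.add_apply, Pi.mul_apply, e1]
    field_simp
    ring
  have hfs : ∀ r, 0 < r → f r < 0 → 0 ≤ f' r := by
    intro r hr hfr
    have hp : 0 < r ^ (N - 2 - l) := Real.rpow_pos_of_pos hr _
    have hq : l * w r + r * w1 r < 0 := by
      by_contra hc
      push Not at hc
      have : 0 ≤ f r := mul_nonneg hp.le hc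
      linarith
    have hw := h.wpos r hr.le
    have h2 : m * a * w r + r * w1 r < 0 := by nlinarith
    have h3 : a * v r + r * dv r < 0 := by
      rw [h.key r hr]
      have : 0 < v r ^ (1 - m) / m := div_pos (Real.rpow_pos_of_pos (h.vpos r hr.le) _) h.hm
      exact mul_neg_of_pos_of_neg this h2
    have h4 : 0 < w2 r + (N - 1) / r * w1 r := by
      have := h.ode r hr
      have h5 := mul_neg_of_pos_of_neg h.hβ h3
      have h6 : 0 < K * (w2 r + (N - 1) / r * w1 r) := by linarith
      exact pos_of_mul_pos_right h6 h.hK.le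
    have h7 : 0 ≤ l * (N - 2 - l) * w r := mul_nonneg (mul_nonneg hl (by linarith)) hw.le
    have h8 : 0 < r ^ (N - 3 - l) := Real.rpow_pos_of_pos hr _
    exact mul_nonneg h8.le (by positivity)
  have hfr : f r < 0 := mul_neg_of_pos_of_neg (Real.rpow_pos_of_pos hr _) hneg
  have hback : ∀ x, 0 < x → x ≤ r → f x ≤ f r := fun x hx hxr =>
    sign_back f f' hfd hfs x r hx hxr hfr
  rcases hl.eq_or_lt with hl0 | hl0
  · -- case `l = 0`
    set y := min r 1 with hy
    have hy0 : 0 < y := lt_min hr one_pos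
    have hw1 : ∀ x, 0 < x → x < y → w1 x ≤ f r := by
      intro x hx hxy
      have h1 := hback x hx (hxy.le.trans (min_le_left _ _))
      have e : f x = x ^ (N - 2) * x * w1 x := by simp only [hf, ← hl0]; ring_nf
      have hx1 : x < 1 := hxy.trans_le (min_le_right _ _)
      have h2 : x ^ (N - 2) ≤ 1 := Real.rpow_le_one hx.le hx1.le (by linarith [h.hN])
      have h2' : 0 < x ^ (N - 2) := Real.rpow_pos_of_pos hx _
      have h3 : x ^ (N - 2) * x ≤ 1 := by nlinarith
      have h3' : 0 < x ^ (N - 2) * x := by positivity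
      have h4 : w1 x < 0 := by
        by_contra hc
        push Not at hc
        have := mul_nonneg h3'.le hc
        linarith
      nlinarith
    have hanti : AntitoneOn (fun x => w x - f r * x) (Icc 0 y) := by
      apply antitoneOn_of_deriv_nonpos (convex_Icc _ _)
      · exact (h.wcont.mono Icc_subset_Ici_self).sub (by fun_prop)
      · intro x hx
        rw [interior_Icc] at hx
        exact ((h.hdw x hx.1).sub ((hasDerivAt_id x).const_mul (f r))).differentiableAt.differentiableWithinAt
      · intro x hx
        rw [interior_Icc] at hx
        have e := ((h.hdw x hx.1).sub ((hasDerivAt_id x).const_mul (f r))).deriv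
        erw [e]
        linarith [hw1 x hx.1 hx.2]
    have hsl := (hasDerivWithinAt_iff_tendsto_slope.1 h.w0)
    have e : (Ici (0:ℝ)) \ {0} = Ioi 0 := by simp
    rw [e] at hsl
    have : (0:ℝ) ≤ f r := by
      apply le_of_tendsto hsl
      have : Ioo 0 y ∈ nhdsWithin (0:ℝ) (Ioi 0) := Ioo_mem_nhdsGT hy0
      filter_upwards [this] with x hx
      have h1 := hanti (left_mem_Icc.2 hy0.le) ⟨hx.1.le, hx.2.le⟩ hx.1.le
      simp only [mul_zero, sub_zero] at h1
      rw [slope_def_field, sub_zero, div_le_iff₀ hx.1]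
      linarith
    linarith
  · -- case `0 < l`
    have hpd : ∀ x, 0 < x → HasDerivAt (fun x => x ^ l * w x) (x ^ (l - 1) * (l * w x + x * w1 x)) x := by
      intro x hx
      refine ((Real.hasDerivAt_rpow_const (x := x) (p := l) (Or.inl hx.ne')).mul (h.hdw x hx)).congr_deriv ?_
      have e1 : x ^ l = x ^ (l - 1) * x := by
        rw [← Real.rpow_add_one hx.ne']; ring_nf
      rw [e1]; ring
    have hanti : AntitoneOn (fun x => x ^ l * w x) (Ioc 0 r) := by
      apply antitoneOn_of_deriv_nonpos (convex_Ioc _ _)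
      · exact fun x hx => (hpd x hx.1).continuousAt.continuousWithinAt
      · intro x hx
        rw [interior_Ioc] at hx
        exact (hpd x hx.1).differentiableAt.differentiableWithinAt
      · intro x hx
        rw [interior_Ioc] at hx
        rw [(hpd x hx.1).deriv]
        have h1 := hback x hx.1 hx.2.le
        have h2 : l * w x + x * w1 x < 0 := by
          by_contra hc
          push Not at hc
          have : 0 ≤ f x := mul_nonneg (Real.rpow_pos_of_pos hx.1 _).le hc
          linarith
        exact mul_nonpos_of_nonneg_of_nonpos (Real.rpow_pos_of_pos hx.1 _).le h2.le
    have ht : Tendsto (fun x => x ^ l * w x) (nhdsWithin 0 (Ioi 0)) (nhds (0 ^ l * w 0)) := by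
      apply Tendsto.mul
      · exact (Real.continuousAt_rpow_const 0 l (Or.inr hl0.le)).tendsto.mono_left nhdsWithin_le_nhds
      · exact (h.wcont 0 self_mem_Ici).tendsto.mono_left (nhdsWithin_mono _ Ioi_subset_Ici_self)
    rw [Real.zero_rpow hl0.ne', zero_mul] at ht
    have : r ^ l * w r ≤ 0 := by
      apply ge_of_tendsto ht
      filter_upwards [Ioo_mem_nhdsGT hr] with x hx
      exact hanti ⟨hx.1, hx.2.le⟩ ⟨hr, le_rfl⟩ hx.2.le
    have := mul_pos (Real.rpow_pos_of_pos hr l) (h.wpos r hr.le)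
    linarith

lemma qderiv (h : RDat N m a β K v dv w w1 w2) (r : ℝ) (hr : 0 < r) :
    HasDerivAt (fun r => r ^ a * v r) (r ^ (a - 1) * (a * v r + r * dv r)) r := by
  refine ((Real.hasDerivAt_rpow_const (x := r) (p := a) (Or.inl hr.ne')).mul (h.hdv r hr)).congr_deriv ?_
  have e1 : r ^ a = r ^ (a - 1) * r := by
    rw [← Real.rpow_add_one hr.ne']; ring_nf
  rw [e1]; ring

lemma core (h : RDat N m a β K v dv w w1 w2) (l ε C0 : ℝ) (hε : 0 < ε) (hC0 : 0 ≤ C0)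
    (hnn : ∀ r, 0 < r → 0 ≤ l * w r + r * w1 r)
    (hw : ∀ r, 1 ≤ r → r ^ (a - 2) * w r ≤ C0 * r ^ (-ε) * (r ^ a * v r)) :
    ∃ R c D : ℝ, 1 ≤ R ∧ 0 < c ∧ ∀ r, R ≤ r →
      c ≤ β * (r ^ a * v r) + K * (r ^ (a - 1) * w1 r + (N - a) * (r ^ (a - 2) * w r)) ∧
      r ^ a * v r ≤ D := by
  set G : ℝ → ℝ := fun r =>
    β * (r ^ a * v r) + K * (r ^ (a - 1) * w1 r + (N - a) * (r ^ (a - 2) * w r)) with hG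
  set G' : ℝ → ℝ := fun r => K * ((N - a) * (a - 2)) * (r ^ (a - 2) * w r) / r with hG'
  have hβ := h.hβ
  have hK := h.hK
  have hGd : ∀ r, 0 < r → HasDerivAt G (G' r) r := by
    intro r hr
    have h1 := ((h.qderiv r hr).const_mul β).add
      ((((Real.hasDerivAt_rpow_const (x := r) (p := a - 1) (Or.inl hr.ne')).mul (h.hdw1 r hr)).add
        (((Real.hasDerivAt_rpow_const (x := r) (p := a - 2) (Or.inl hr.ne')).mul
          (h.hdw r hr)).const_mul (N - a))).const_mul K)
    refine h1.congr_deriv ?_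
    have e1 : r ^ (a - 1) = r ^ (a - 3) * r ^ 2 := by
      rw [← Real.rpow_natCast r 2, ← Real.rpow_add hr]; congr 1; push_cast; ring
    have e2 : r ^ (a - 2) = r ^ (a - 3) * r := by
      rw [← Real.rpow_add_one hr.ne']; ring_nf
    have e3 : r ^ (a - 2 - 1) = r ^ (a - 3) := by ring_nf
    have e4 : r ^ (a - 1 - 1) = r ^ (a - 3) * r := by rw [← e2]; ring_nf
    have ho := h.ode r hr
    have ho2 : β * (a * v r + r * dv r) = - (K * (w2 r + (N - 1) / r * w1 r)) := by linarith
    simp only [hG', e3, e4, e2, e1]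
    rw [show β * (r ^ (a - 3) * r ^ 2 * (a * v r + r * dv r))
      = r ^ (a - 3) * r ^ 2 * (β * (a * v r + r * dv r)) by ring, ho2]
    field_simp
    ring
  have hqpos : ∀ r, 0 < r → 0 < r ^ a * v r := fun r hr =>
    mul_pos (Real.rpow_pos_of_pos hr _) (h.vpos r hr.le)
  have hlim : Tendsto (fun r : ℝ => K * |N - a - l| * C0 * r ^ (-ε)) atTop (nhds 0) := by
    simpa using (tendsto_rpow_neg_atTop hε).const_mul (K * |N - a - l| * C0)
  obtain ⟨R0, hR0⟩ := eventually_atTop.1 (hlim.eventually (ge_mem_nhds (half_pos hβ)))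
  set R := max R0 1 with hR
  have hR1 : 1 ≤ R := le_max_right _ _
  have hGq : ∀ r, R ≤ r → β / 2 * (r ^ a * v r) ≤ G r := by
    intro r hr
    have hr1 : 1 ≤ r := hR1.trans hr
    have hr0 : 0 < r := by linarith
    have h1 := hR0 r ((le_max_left _ _).trans hr)
    have h2 : -(l * (r ^ (a - 2) * w r)) ≤ r ^ (a - 1) * w1 r := by
      have e1 : r ^ (a - 1) = r ^ (a - 2) * r := by
        rw [← Real.rpow_add_one hr0.ne']; ring_nf
      have := mul_nonneg (Real.rpow_pos_of_pos hr0 (a - 2)).le (hnn r hr0)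
      rw [e1]; linarith
    have h3 := hw r hr1
    have h4 : 0 < r ^ (a - 2) * w r := mul_pos (Real.rpow_pos_of_pos hr0 _) (h.wpos r hr0.le)
    have h5 : -(|N - a - l| * (r ^ (a - 2) * w r)) ≤ (N - a - l) * (r ^ (a - 2) * w r) := by
      have := neg_abs_le (N - a - l)
      nlinarith
    have h6 : |N - a - l| * (r ^ (a - 2) * w r) ≤ |N - a - l| * (C0 * r ^ (-ε) * (r ^ a * v r)) :=
      mul_le_mul_of_nonneg_left h3 (abs_nonneg _)
    have h7 : K * (-(|N - a - l| * (C0 * r ^ (-ε) * (r ^ a * v r)))) ≤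
        K * (r ^ (a - 1) * w1 r + (N - a) * (r ^ (a - 2) * w r)) :=
      mul_le_mul_of_nonneg_left (by linarith) hK.le
    have h8 : K * |N - a - l| * C0 * r ^ (-ε) * (r ^ a * v r) ≤ β / 2 * (r ^ a * v r) :=
      mul_le_mul_of_nonneg_right h1 (hqpos r hr0).le
    simp only [hG]
    linarith
  have hC : 0 ≤ 2 * K * |(N - a) * (a - 2)| * C0 / β := by positivity
  obtain ⟨c, D, hc, hcD⟩ := gronwall_pow G G' R (2 * K * |(N - a) * (a - 2)| * C0 / β) ε
    (by linarith) hε (fun r hr => hGd r (by linarith))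
    (fun r hr => lt_of_lt_of_le (mul_pos (half_pos hβ) (hqpos r (by linarith))) (hGq r hr))
    (by
      intro r hr
      have hr1 : 1 ≤ r := hR1.trans hr
      have hr0 : 0 < r := by linarith
      have h4 : 0 < r ^ (a - 2) * w r := mul_pos (Real.rpow_pos_of_pos hr0 _) (h.wpos r hr0.le)
      have e : |G' r| = K * |(N - a) * (a - 2)| * (r ^ (a - 2) * w r) / r := by
        simp only [hG']
        rw [abs_div, abs_mul, abs_mul, abs_of_pos hr0, abs_of_pos hK, abs_of_pos h4]
      have e1 : r ^ (-ε - 1) = r ^ (-ε) / r := Real.rpow_sub_one hr0.ne' _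
      have h5 : r ^ a * v r ≤ 2 / β * G r := by
        have := hGq r hr
        rw [div_mul_eq_mul_div, le_div_iff₀ hβ]; linarith
      rw [e, e1]
      have hp : 0 < r ^ (-ε) := Real.rpow_pos_of_pos hr0 _
      calc K * |(N - a) * (a - 2)| * (r ^ (a - 2) * w r) / r
          ≤ K * |(N - a) * (a - 2)| * (C0 * r ^ (-ε) * (2 / β * G r)) / r := by
            have h6 : r ^ (a - 2) * w r ≤ C0 * r ^ (-ε) * (2 / β * G r) :=
              (hw r hr1).trans (by gcongr)
            exact div_le_div_of_nonneg_right (mul_le_mul_of_nonneg_left h6 (by positivity)) hr0.le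
        _ = _ := by field_simp)
    hC
  refine ⟨R, c, D * (2 / β), hR1, hc, fun r hr => ⟨(hcD r hr).1, ?_⟩⟩
  have := hGq r hr
  have h2 := (hcD r hr).2
  rw [mul_div_assoc', le_div_iff₀ hβ]
  linarith

lemma finish (h : RDat N m a β K v dv w w1 w2) (R c D : ℝ) (hc : 0 < c)
    (hb : ∀ r, R ≤ r → c ≤ r ^ a * v r ∧ r ^ a * v r ≤ D) :
    ∃ c C : ℝ, 0 < c ∧ c ≤ C ∧
      ∀ r : ℝ, 1 ≤ r → c ≤ r ^ a * v r ∧ r ^ a * v r ≤ C := by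
  have hcont : ContinuousOn (fun r => r ^ a * v r) (Icc 1 (max R 1)) := fun r hr =>
    (h.qderiv r (by linarith [hr.1])).continuousAt.continuousWithinAt
  have hne : (Icc 1 (max R 1)).Nonempty := nonempty_Icc.2 (le_max_right _ _)
  obtain ⟨x, hx, hxm⟩ := isCompact_Icc.exists_isMinOn hne hcont
  obtain ⟨y, hy, hym⟩ := isCompact_Icc.exists_isMaxOn hne hcont
  have hx0 : 0 < x ^ a * v x :=
    mul_pos (Real.rpow_pos_of_pos (by linarith [hx.1]) _) (h.vpos x (by linarith [hx.1]))
  have main : ∀ r : ℝ, 1 ≤ r → min c (x ^ a * v x) ≤ r ^ a * v r ∧ r ^ a * v r ≤ max D (y ^ a * v y) := by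
    intro r hr
    rcases le_total R r with h1 | h1
    · exact ⟨(min_le_left _ _).trans (hb r h1).1, (hb r h1).2.trans (le_max_left _ _)⟩
    · have hm : r ∈ Icc 1 (max R 1) := ⟨hr, h1.trans (le_max_left _ _)⟩
      exact ⟨(min_le_right _ _).trans (hxm hm), le_trans (hym hm) (le_max_right _ _)⟩
  exact ⟨_, _, lt_min hc hx0, (main 1 le_rfl).1.trans (main 1 le_rfl).2, main⟩

lemma case_pos (h : RDat N m a β K v dv w w1 w2) (ha : 0 < a) (hma : m * a < N - 2)
    (hδ : 0 < 2 - (1 - m) * a) :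
    ∃ c C : ℝ, 0 < c ∧ c ≤ C ∧
      ∀ r : ℝ, 1 ≤ r → c ≤ r ^ a * v r ∧ r ^ a * v r ≤ C := by
  have hnn := h.nonneg (m * a) (mul_nonneg h.hm.le ha.le) le_rfl hma
  have hmono : MonotoneOn (fun r => r ^ a * v r) (Ioi 0) := by
    apply monotoneOn_of_deriv_nonneg (convex_Ioi _)
    · exact fun x hx => (h.qderiv x hx).continuousAt.continuousWithinAt
    · intro x hx
      rw [interior_Ioi] at hx
      exact (h.qderiv x hx).differentiableAt.differentiableWithinAt
    · intro x hx
      rw [interior_Ioi] at hx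
      rw [(h.qderiv x hx).deriv, h.key x hx]
      have h1 : 0 < v x ^ (1 - m) / m := div_pos (Real.rpow_pos_of_pos (h.vpos x (le_of_lt hx)) _) h.hm
      exact mul_nonneg (Real.rpow_pos_of_pos hx _).le (mul_nonneg h1.le (hnn x hx))
  have hv1 : 0 < v 1 := h.vpos 1 zero_le_one
  have hq1 : ∀ r, 1 ≤ r → v 1 ≤ r ^ a * v r := by
    intro r hr
    have := hmono (mem_Ioi.2 one_pos) (mem_Ioi.2 (one_pos.trans_le hr)) hr
    simpa using this
  obtain ⟨R, c, D, hR, hc, hb⟩ := h.core (m * a) (2 - (1 - m) * a) (v 1 ^ (m - 1)) hδ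
    (Real.rpow_pos_of_pos hv1 _).le hnn (by
      intro r hr
      have hr0 : 0 < r := by linarith
      have hv := h.vpos r hr0.le
      have hq : 0 < r ^ a * v r := mul_pos (Real.rpow_pos_of_pos hr0 _) hv
      have h1 : (r ^ a * v r) ^ (m - 1) ≤ v 1 ^ (m - 1) :=
        Real.rpow_le_rpow_of_nonpos hv1 (hq1 r hr) (by linarith [h.hm1])
      have e : r ^ (a - 2) * w r = (r ^ a * v r) ^ (m - 1) * r ^ (-(2 - (1 - m) * a)) * (r ^ a * v r) := by
        rw [h.wdef, Real.mul_rpow (Real.rpow_pos_of_pos hr0 _).le hv.le, ← Real.rpow_mul hr0.le]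
        rw [show v r ^ m = v r ^ (m - 1) * v r by rw [← Real.rpow_add_one hv.ne']; ring_nf]
        rw [show r ^ (a - 2) = r ^ (a * (m - 1)) * r ^ (-(2 - (1 - m) * a)) * r ^ a by
          rw [← Real.rpow_add hr0, ← Real.rpow_add hr0]; ring_nf]
        ring
      rw [e]
      have := Real.rpow_pos_of_pos hr0 (-(2 - (1 - m) * a))
      gcongr)
  exact h.finish R (v 1) D hv1 fun r hr => ⟨hq1 r (hR.trans hr), (hb r hr).2⟩

lemma case_neg (h : RDat N m a β K v dv w w1 w2) (ha : a ≤ 0) :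
    ∃ c C : ℝ, 0 < c ∧ c ≤ C ∧
      ∀ r : ℝ, 1 ≤ r → c ≤ r ^ a * v r ∧ r ^ a * v r ≤ C := by
  have hN := h.hN
  have hβ := h.hβ
  have hK := h.hK
  have hnn := h.nonneg 0 le_rfl (mul_nonpos_of_nonneg_of_nonpos h.hm.le ha) (by linarith)
  have hw1 : ∀ r, 0 < r → 0 ≤ w1 r := by
    intro r hr
    have := hnn r hr
    rw [zero_mul, zero_add] at this
    exact nonneg_of_mul_nonneg_right this hr
  have hdv : ∀ r, 0 < r → 0 ≤ dv r := by
    intro r hr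
    rw [h.w1def r hr]
    exact div_nonneg (mul_nonneg (Real.rpow_pos_of_pos (h.vpos r hr.le) _).le (hw1 r hr)) h.hm.le
  have hmono : MonotoneOn v (Ioi 0) := by
    apply monotoneOn_of_deriv_nonneg (convex_Ioi _)
    · exact fun x hx => (h.hdv x hx).continuousAt.continuousWithinAt
    · intro x hx
      rw [interior_Ioi] at hx
      exact (h.hdv x hx).differentiableAt.differentiableWithinAt
    · intro x hx
      rw [interior_Ioi] at hx
      rw [(h.hdv x hx).deriv]
      exact hdv x hx
  have hv1 : 0 < v 1 := h.vpos 1 zero_le_one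
  have hvr : ∀ r, 1 ≤ r → v 1 ≤ v r := fun r hr =>
    hmono (mem_Ioi.2 one_pos) (mem_Ioi.2 (one_pos.trans_le hr)) hr
  have hC0 : 0 < v 1 ^ (m - 1) := Real.rpow_pos_of_pos hv1 _
  have hwb : ∀ r, 1 ≤ r → r ^ (a - 2) * w r ≤ v 1 ^ (m - 1) * r ^ (-2 : ℝ) * (r ^ a * v r) := by
    intro r hr
    have hr0 : 0 < r := by linarith
    have hv := h.vpos r hr0.le
    have h1 : v r ^ (m - 1) ≤ v 1 ^ (m - 1) :=
      Real.rpow_le_rpow_of_nonpos hv1 (hvr r hr) (by linarith [h.hm1])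
    have e : r ^ (a - 2) * w r = v r ^ (m - 1) * r ^ (-2 : ℝ) * (r ^ a * v r) := by
      rw [h.wdef]
      rw [show v r ^ m = v r ^ (m - 1) * v r by rw [← Real.rpow_add_one hv.ne']; ring_nf]
      rw [show r ^ (a - 2) = r ^ (-2 : ℝ) * r ^ a by
        rw [← Real.rpow_add hr0]; ring_nf]
      ring
    rw [e]
    have := Real.rpow_pos_of_pos hr0 (-2 : ℝ)
    have := Real.rpow_pos_of_pos hr0 a
    gcongr
  obtain ⟨R, c, D, hR, hc, hb⟩ := h.core 0 2 (v 1 ^ (m - 1)) two_pos hC0.le hnn hwb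
  -- bound of `w1`
  set k : ℝ := β * (-a) / (K * N) with hk
  have hk0 : 0 ≤ k := by
    apply div_nonneg (mul_nonneg hβ.le (by linarith)) (by positivity)
  set U : ℝ → ℝ := fun r => r ^ (N - 1) * w1 r - k * (r ^ N * v r) with hU
  have hUd : ∀ r, 0 < r → HasDerivAt U (-(β / K + k) * (r ^ N * dv r)) r := by
    intro r hr
    have h1 := ((Real.hasDerivAt_rpow_const (x := r) (p := N - 1) (Or.inl hr.ne')).mul (h.hdw1 r hr)).sub
      (((Real.hasDerivAt_rpow_const (x := r) (p := N) (Or.inl hr.ne')).mul (h.hdv r hr)).const_mul k)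
    refine h1.congr_deriv ?_
    have e1 : r ^ N = r ^ (N - 1) * r := by rw [← Real.rpow_add_one hr.ne']; ring_nf
    have e2 : r ^ (N - 1 - 1) = r ^ (N - 1) / r := Real.rpow_sub_one hr.ne' _
    have e3 : w2 r = -(β / K) * (a * v r + r * dv r) - (N - 1) / r * w1 r := by
      have := h.ode r hr
      field_simp at this ⊢
      linarith
    rw [e1, e2, e3, hk]
    field_simp
    ring
  have hUanti : AntitoneOn U (Ioi 0) := by
    apply antitoneOn_of_deriv_nonpos (convex_Ioi _)
    · exact fun x hx => (hUd x hx).continuousAt.continuousWithinAt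
    · intro x hx
      rw [interior_Ioi] at hx
      exact (hUd x hx).differentiableAt.differentiableWithinAt
    · intro x hx
      rw [interior_Ioi] at hx
      rw [(hUd x hx).deriv]
      have h1 : 0 ≤ β / K + k := by positivity
      have h2 := mul_nonneg (Real.rpow_pos_of_pos hx N).le (hdv x hx)
      have := mul_nonneg h1 h2
      linarith
  set M : ℝ := w1 1 / v 1 + k with hM
  have hM0 : 0 ≤ M := by
    have := hw1 1 one_pos
    positivity
  have hw1b : ∀ r, 1 ≤ r → r ^ (a - 1) * w1 r ≤ M * (r ^ a * v r) := by
    intro r hr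
    have hr0 : 0 < r := by linarith
    have h1 := hUanti (mem_Ioi.2 one_pos) (show r ∈ Ioi 0 from hr0) hr
    simp only [hU, Real.one_rpow, one_mul] at h1
    have h2 : w1 1 ≤ w1 1 / v 1 * (r ^ N * v r) := by
      have h3 : v 1 ≤ r ^ N * v r := by
        have := Real.one_le_rpow hr (show 0 ≤ N by linarith)
        nlinarith [hvr r hr]
      calc w1 1 = w1 1 / v 1 * v 1 := by field_simp
        _ ≤ _ := mul_le_mul_of_nonneg_left h3 (div_nonneg (hw1 1 one_pos) hv1.le)
    have h4 : r ^ (N - 1) * w1 r ≤ M * (r ^ N * v r) := by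
      have : 0 ≤ k * v 1 := by positivity
      rw [hM, add_mul]; linarith
    have h5 := mul_le_mul_of_nonneg_left h4 (Real.rpow_pos_of_pos hr0 (a - N)).le
    have e1 : r ^ (a - 1) = r ^ (a - N) * r ^ (N - 1) := by rw [← Real.rpow_add hr0]; ring_nf
    have e2 : r ^ a = r ^ (a - N) * r ^ N := by rw [← Real.rpow_add hr0]; ring_nf
    rw [e1, e2]
    linarith
  have hS : 0 < β + K * (M + (N - a) * v 1 ^ (m - 1)) := by
    have : 0 ≤ N - a := by linarith
    positivity
  refine h.finish R (c / (β + K * (M + (N - a) * v 1 ^ (m - 1)))) D (div_pos hc hS)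
    fun r hr => ⟨?_, (hb r hr).2⟩
  have hr1 : 1 ≤ r := hR.trans hr
  have hr0 : 0 < r := by linarith
  have hq : 0 < r ^ a * v r := mul_pos (Real.rpow_pos_of_pos hr0 _) (h.vpos r hr0.le)
  rw [div_le_iff₀ hS]
  have h1 := (hb r hr).1
  have h2 := hw1b r hr1
  have h3 : r ^ (a - 2) * w r ≤ v 1 ^ (m - 1) * (r ^ a * v r) := by
    refine (hwb r hr1).trans ?_
    have : r ^ (-2 : ℝ) ≤ 1 := Real.rpow_le_one_of_one_le_of_nonpos hr1 (by norm_num)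
    have := mul_le_mul_of_nonneg_left this hC0.le
    rw [mul_one] at this
    gcongr
  have h4 := mul_le_mul_of_nonneg_left h3 (show 0 ≤ N - a by linarith)
  have h5 := mul_le_mul_of_nonneg_left (add_le_add h2 h4) hK.le
  linarith

end RDat

lemma main_red (n : ℕ) (hn : 3 ≤ n) (m α β η : ℝ)
    (hm : 0 < m) (hm1 : m < 1) (hβ : 0 < β)
    (v : ℝ → ℝ) (hv : IsRadialSol n m α β η v) :
    RDat n m (α / β) β (((n : ℝ) - 1) / m) v (deriv v) (fun s => v s ^ m)
      (deriv (fun s => v s ^ m)) (deriv (deriv (fun s => v s ^ m))) := by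
  obtain ⟨hpos, hcont, hC2, hd0, -, hode⟩ := hv
  have hn' : (3:ℝ) ≤ n := by exact_mod_cast hn
  have hvd : ∀ r, 0 < r → HasDerivAt v (deriv v r) r := fun r hr =>
    ((hC2.differentiableOn (by norm_num)).differentiableAt (Ioi_mem_nhds hr)).hasDerivAt
  have hwC : ContDiffOn ℝ 2 (fun s => v s ^ m) (Ioi 0) :=
    hC2.rpow_const_of_ne fun x hx => (hpos x (mem_Ici.2 (le_of_lt (mem_Ioi.1 hx)))).ne'
  have hwd : ∀ r, 0 < r → HasDerivAt (fun s => v s ^ m) (deriv (fun s => v s ^ m) r) r := fun r hr =>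
    ((hwC.differentiableOn (by norm_num)).differentiableAt (Ioi_mem_nhds hr)).hasDerivAt
  have hw1C : ContDiffOn ℝ 1 (deriv (fun s => v s ^ m)) (Ioi 0) :=
    hwC.deriv_of_isOpen isOpen_Ioi (by norm_num)
  refine ⟨hn', hm, hm1, hβ, div_pos (by linarith) hm, hpos, fun _ => rfl, ?_, ?_, hvd, hwd, ?_, ?_, ?_⟩
  · exact hcont.rpow_const fun x hx => Or.inl (hpos x hx).ne'
  · have := hd0.rpow_const (p := m) (Or.inl (hpos 0 self_mem_Ici).ne')
    simpa using this
  · exact fun r hr =>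
      ((hw1C.differentiableOn (by norm_num)).differentiableAt (Ioi_mem_nhds hr)).hasDerivAt
  · intro r hr
    have hvr := hpos r (mem_Ici.2 (le_of_lt hr))
    have e := ((hvd r hr).rpow_const (p := m) (Or.inl hvr.ne')).deriv
    rw [e]
    have e2 : v r ^ (1 - m) * v r ^ (m - 1) = 1 := by
      rw [← Real.rpow_add hvr]; simp
    rw [show v r ^ (1 - m) * (deriv v r * m * v r ^ (m - 1)) / m
      = v r ^ (1 - m) * v r ^ (m - 1) * deriv v r * (m / m) by ring, e2, div_self hm.ne']
    ring
  · intro r hr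
    have := hode r hr
    rw [show β * (α / β * v r + r * deriv v r) = α * v r + β * r * deriv v r by field_simp]
    linarith

theorem stmt18 (n : ℕ) (hn : 3 ≤ n) (m α β η : ℝ) (hη : 0 < η)
    (hm : 0 < m) (hm' : m < ((n : ℝ) - 2) / n)
    (hαβ : max α 0 < 2 * β / (1 - m))
    (v : ℝ → ℝ) (hv : IsRadialSol n m α β η v) :
    ∃ c C : ℝ, 0 < c ∧ c ≤ C ∧
      ∀ r : ℝ, 1 ≤ r → c ≤ r ^ (α / β) * v r ∧ r ^ (α / β) * v r ≤ C := by
  have hn' : (3:ℝ) ≤ n := by exact_mod_cast hn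
  have hmn : m * n < n - 2 := (lt_div_iff₀ (by linarith)).1 hm'
  have hm1 : m < 1 := by nlinarith
  have h1m : 0 < 1 - m := by linarith
  have h0 : 0 < 2 * β / (1 - m) := (le_max_right _ _).trans_lt hαβ
  have hβ : 0 < β := by
    have := (div_pos_iff_of_pos_right h1m).1 h0
    linarith
  have hα : α * (1 - m) < 2 * β := (lt_div_iff₀ h1m).1 ((le_max_left _ _).trans_lt hαβ)
  have hD := main_red n hn m α β η hm hm1 hβ v hv
  have ha : α / β * (1 - m) < 2 := by
    rw [div_mul_eq_mul_div, div_lt_iff₀ hβ]; exact hα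
  rcases le_or_gt (α / β) 0 with h | h
  · exact hD.case_neg h
  · refine hD.case_pos h ?_ (by linarith)
    have h1 : m * (α / β) * (1 - m) < (n - 2) * (1 - m) := by nlinarith
    exact lt_of_mul_lt_mul_right h1 h1m.le
end
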